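/- Assume that there are constants 0 < c₁ ≤ c₂ such that c₁ ψ^{L,+}(1/r) ≤ N⁺(r) ≤ c₂ ψ^{L,+}(1/r) and c₁ ψ^{L,−}(1/r) ≤ N⁻(r) ≤ c₂ ψ^{L,−}(1/r) for all r > 0, and that there are constants β > 0 and c₀ > 0 such that ψ^{L,±}(λξ) ≥ c₀ λ^β ψ^{L,±}(ξ) for all λ ≥ 1, ξ > 0 and both signs. Then for every R > 1 there exists a constant ζ = ζ(R) > 0 such that τ(Rt) ≤ R^ζ τ(t) for all t > 0. -/

import Mathlib

/-!
The Pruitt function transfers its polynomial scaling to the tail: for `l ≥ 1` and `r > 0`,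
`c₁ c₀ l ^ β N(l r) ≤ c₂ N(r)` (`tail_scaling`). Two consequences are used. First, since the
Lévy condition gives `N(1) < ∞`, the tail tends to `0` at infinity, so the sets whose suprema
define `τ±` are bounded above (`tail_bddAbove`). Second, if `l` is so large that
`c₂ R ≤ c₁ c₀ l ^ β`, then `N(s) ≥ 1/(R t)` forces `N(s / l) ≥ 1/t`, hence `s ≤ l τ(t)`
(`tail_sSup_le`). Taking `l = R ^ ζ` with `ζ` large handles both signs at once.
-/

open MeasureTheory Set
open scoped ENNReal

noncomputable section

/-- Upper tail of the Lévy measure: `N⁺(r) = ν((r,∞))`. -/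
def Nplus (ν : Measure ℝ) (r : ℝ) : ℝ≥0∞ := ν (Ioi r)

/-- Lower tail of the Lévy measure: `N⁻(r) = ν((−∞,−r))`. -/
def Nminus (ν : Measure ℝ) (r : ℝ) : ℝ≥0∞ := ν (Iio (-r))

/-- Generalized inverse `τ⁺(t) = sup{r ≥ 0 : N⁺(r) ≥ 1/t}`. -/
def tauPlus (ν : Measure ℝ) (t : ℝ) : ℝ :=
  sSup {r : ℝ | 0 ≤ r ∧ ENNReal.ofReal (1 / t) ≤ Nplus ν r}

/-- Generalized inverse `τ⁻(t) = sup{r ≥ 0 : N⁻(r) ≥ 1/t}`. -/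
def tauMinus (ν : Measure ℝ) (t : ℝ) : ℝ :=
  sSup {r : ℝ | 0 ≤ r ∧ ENNReal.ofReal (1 / t) ≤ Nminus ν r}

/-- `τ(t) = max(τ⁺(t), τ⁻(t))`. -/
def tauFn (ν : Measure ℝ) (t : ℝ) : ℝ := max (tauPlus ν t) (tauMinus ν t)

/-- Positive Pruitt function `ψ^{L,+}(ξ) = ∫_{u>0, |uξ|≤1} |uξ|² ν(du)`. -/
def psiPlus (ν : Measure ℝ) (ξ : ℝ) : ℝ≥0∞ :=
  ∫⁻ u in {u : ℝ | 0 < u ∧ |u * ξ| ≤ 1}, ENNReal.ofReal (|u * ξ| ^ 2) ∂ν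

/-- Negative Pruitt function `ψ^{L,−}(ξ) = ∫_{u<0, |uξ|≤1} |uξ|² ν(du)`. -/
def psiMinus (ν : Measure ℝ) (ξ : ℝ) : ℝ≥0∞ :=
  ∫⁻ u in {u : ℝ | u < 0 ∧ |u * ξ| ≤ 1}, ENNReal.ofReal (|u * ξ| ^ 2) ∂ν

/-- The scaling of the Pruitt function `ψ`, transferred to the comparable tail `N`. -/
lemma tail_scaling {N ψ : ℝ → ℝ≥0∞} {c₀ c₁ c₂ β : ℝ} (hc₁ : 0 < c₁)
    (hb : ∀ r : ℝ, 0 < r → ENNReal.ofReal c₁ * ψ (1 / r) ≤ N r ∧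
      N r ≤ ENNReal.ofReal c₂ * ψ (1 / r))
    (hs : ∀ l ξ : ℝ, 1 ≤ l → 0 < ξ → ENNReal.ofReal (c₀ * l ^ β) * ψ ξ ≤ ψ (l * ξ))
    {l r : ℝ} (hl : 1 ≤ l) (hr : 0 < r) :
    ENNReal.ofReal (c₁ * (c₀ * l ^ β)) * N (l * r) ≤ ENNReal.ofReal c₂ * N r := by
  have hl0 : 0 < l := by linarith
  have h := hs l (1 / (l * r)) hl (by positivity)
  have e : l * (1 / (l * r)) = 1 / r := by field_simp
  rw [e] at h
  calc ENNReal.ofReal (c₁ * (c₀ * l ^ β)) * N (l * r)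
      ≤ ENNReal.ofReal (c₁ * (c₀ * l ^ β)) * (ENNReal.ofReal c₂ * ψ (1 / (l * r))) := by
        gcongr; exact (hb (l * r) (by positivity)).2
    _ = ENNReal.ofReal c₂ * (ENNReal.ofReal c₁ *
          (ENNReal.ofReal (c₀ * l ^ β) * ψ (1 / (l * r)))) := by
        rw [ENNReal.ofReal_mul hc₁.le]; ring
    _ ≤ ENNReal.ofReal c₂ * (ENNReal.ofReal c₁ * ψ (1 / r)) := by gcongr
    _ ≤ ENNReal.ofReal c₂ * N r := by gcongr; exact (hb r hr).1

/-- A tail that is finite at `1` and decays polynomially has bounded superlevel sets, so the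
supremum defining its generalized inverse is not a junk value. -/
lemma tail_bddAbove {N : ℝ → ℝ≥0∞} {c₀ c₁ c₂ β : ℝ} (hc₁ : 0 < c₁) (hc₀ : 0 < c₀) (hβ : 0 < β)
    (hN : N 1 ≠ ⊤)
    (h : ∀ l r : ℝ, 1 ≤ l → 0 < r →
      ENNReal.ofReal (c₁ * (c₀ * l ^ β)) * N (l * r) ≤ ENNReal.ofReal c₂ * N r)
    {t : ℝ} (ht : 0 < t) :
    BddAbove {r : ℝ | 0 ≤ r ∧ ENNReal.ofReal (1 / t) ≤ N r} := by
  set K : ℝ := (ENNReal.ofReal c₂ * N 1).toReal with hK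
  have hKN : ENNReal.ofReal c₂ * N 1 = ENNReal.ofReal K :=
    (ENNReal.ofReal_toReal (ENNReal.mul_ne_top ENNReal.ofReal_ne_top hN)).symm
  have hK0 : 0 ≤ K := ENNReal.toReal_nonneg
  refine ⟨max 1 ((K * t / (c₁ * c₀)) ^ β⁻¹), ?_⟩
  rintro r ⟨hr0, hr⟩
  rcases le_total r 1 with h1 | h1
  · exact h1.trans (le_max_left _ _)
  refine le_trans ?_ (le_max_right _ _)
  have h2 := h r 1 h1 one_pos
  rw [mul_one, hKN] at h2
  have h3 : ENNReal.ofReal (c₁ * (c₀ * r ^ β) * (1 / t)) ≤ ENNReal.ofReal K := by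
    rw [ENNReal.ofReal_mul (by positivity)]
    exact le_trans (by gcongr) h2
  rw [ENNReal.ofReal_le_ofReal_iff hK0, mul_one_div, div_le_iff₀ ht] at h3
  rw [Real.le_rpow_inv_iff_of_pos hr0 (by positivity) hβ, le_div_iff₀ (by positivity)]
  linarith

/-- Enlarging `t` by the factor `R` enlarges the generalized inverse of the tail by at most `l`,
once `l` is large enough to absorb `R` and the comparison constants. -/
lemma tail_sSup_le {N : ℝ → ℝ≥0∞} {c₀ c₁ c₂ β : ℝ} (hc₁ : 0 < c₁) (hc₂ : 0 < c₂) (hc₀ : 0 < c₀)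
    (hβ : 0 < β) (hN : N 1 ≠ ⊤)
    (h : ∀ l r : ℝ, 1 ≤ l → 0 < r →
      ENNReal.ofReal (c₁ * (c₀ * l ^ β)) * N (l * r) ≤ ENNReal.ofReal c₂ * N r)
    {R l t : ℝ} (hR : 0 < R) (hl : 1 ≤ l) (hlR : c₂ * R ≤ c₁ * (c₀ * l ^ β)) (ht : 0 < t) :
    sSup {r : ℝ | 0 ≤ r ∧ ENNReal.ofReal (1 / (R * t)) ≤ N r} ≤
      l * sSup {r : ℝ | 0 ≤ r ∧ ENNReal.ofReal (1 / t) ≤ N r} := by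
  have hl0 : 0 < l := by linarith
  have hS0 : 0 ≤ sSup {r : ℝ | 0 ≤ r ∧ ENNReal.ofReal (1 / t) ≤ N r} :=
    Real.sSup_nonneg fun r hr => hr.1
  refine Real.sSup_le ?_ (by positivity)
  rintro s ⟨hs0, hs⟩
  rcases hs0.eq_or_lt with rfl | hs0
  · positivity
  have h1 := h l (s / l) hl (by positivity)
  rw [mul_div_cancel₀ s hl0.ne'] at h1
  have h2 : ENNReal.ofReal c₂ * ENNReal.ofReal (1 / t) ≤ ENNReal.ofReal c₂ * N (s / l) := by
    refine le_trans ?_ h1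
    refine le_trans ?_ (mul_le_mul_right hs _)
    rw [← ENNReal.ofReal_mul hc₂.le, ← ENNReal.ofReal_mul (by positivity)]
    apply ENNReal.ofReal_le_ofReal
    rw [mul_one_div, mul_one_div, div_le_div_iff₀ ht (by positivity)]
    nlinarith
  rw [ENNReal.mul_le_mul_iff_right (ENNReal.ofReal_pos.2 hc₂).ne' ENNReal.ofReal_ne_top] at h2
  have h3 := le_csSup (tail_bddAbove hc₁ hc₀ hβ hN h ht) (show s / l ∈ _ from ⟨by positivity, h2⟩)
  rwa [div_le_iff₀' hl0] at h3

/-- The Lévy integrability condition gives finite mass to any set at distance at least `1`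
from the origin. -/
lemma levy_far_ne_top {ν : Measure ℝ}
    (hν : (∫⁻ z : ℝ, ENNReal.ofReal (min 1 (z ^ 2)) ∂ν) < ⊤) {A : Set ℝ}
    (hA : ∀ z ∈ A, 1 ≤ z ^ 2) : ν A ≠ ⊤ := by
  have h := mul_meas_ge_le_lintegral (μ := ν)
    (f := fun z : ℝ => ENNReal.ofReal (min 1 (z ^ 2))) (by fun_prop) 1
  rw [one_mul] at h
  refine ((measure_mono fun z hz => ?_).trans_lt (h.trans_lt hν)).ne
  rw [Set.mem_setOf_eq, min_eq_left (hA z hz), ENNReal.ofReal_one]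

/-- Time scaling of `τ`: if `N± ≍ ψ^{L,±}(1/·)` and the Pruitt functions scale
polynomially, then for every `R > 1` there is `ζ > 0` with `τ(Rt) ≤ R^ζ τ(t)`. -/
theorem stmt4
    (ν : Measure ℝ) (c₀ c₁ c₂ β : ℝ)
    (hν0 : ν {0} = 0)
    (hνlevy : (∫⁻ z : ℝ, ENNReal.ofReal (min 1 (z ^ 2)) ∂ν) < ⊤)
    (hc₁ : 0 < c₁) (hc₁₂ : c₁ ≤ c₂) (hβ : 0 < β) (hc₀ : 0 < c₀)
    (hboundp : ∀ r : ℝ, 0 < r →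
      ENNReal.ofReal c₁ * psiPlus ν (1 / r) ≤ Nplus ν r ∧
      Nplus ν r ≤ ENNReal.ofReal c₂ * psiPlus ν (1 / r))
    (hboundm : ∀ r : ℝ, 0 < r →
      ENNReal.ofReal c₁ * psiMinus ν (1 / r) ≤ Nminus ν r ∧
      Nminus ν r ≤ ENNReal.ofReal c₂ * psiMinus ν (1 / r))
    (hscalep : ∀ l ξ : ℝ, 1 ≤ l → 0 < ξ →
      ENNReal.ofReal (c₀ * l ^ β) * psiPlus ν ξ ≤ psiPlus ν (l * ξ))
    (hscalem : ∀ l ξ : ℝ, 1 ≤ l → 0 < ξ →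
      ENNReal.ofReal (c₀ * l ^ β) * psiMinus ν ξ ≤ psiMinus ν (l * ξ)) :
    ∀ R : ℝ, 1 < R → ∃ ζ : ℝ, 0 < ζ ∧
      ∀ t : ℝ, 0 < t → tauFn ν (R * t) ≤ R ^ ζ * tauFn ν t := by
  intro R hR
  have hR0 : 0 < R := by linarith
  have hc₂ : 0 < c₂ := by linarith
  have hM : 0 < c₂ * R / (c₁ * c₀) := by positivity
  -- The logarithm makes `(R ^ ζ) ^ β ≥ c₂ R / (c₁ c₀)`; the maximum keeps `ζ` positive.
  set ζ : ℝ := max 1 (Real.logb R (c₂ * R / (c₁ * c₀)) / β) with hζ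
  have hζ0 : 0 < ζ := lt_of_lt_of_le one_pos (le_max_left _ _)
  have hl : 1 ≤ R ^ ζ := Real.one_le_rpow hR.le hζ0.le
  have hlR : c₂ * R ≤ c₁ * (c₀ * (R ^ ζ) ^ β) := by
    have h1 : c₂ * R / (c₁ * c₀) ≤ (R ^ ζ) ^ β := by
      rw [← Real.rpow_mul hR0.le, ← Real.logb_le_iff_le_rpow hR hM, ← div_le_iff₀ hβ]
      exact le_max_right _ _
    rw [div_le_iff₀ (by positivity)] at h1
    linarith
  have hNp : Nplus ν 1 ≠ ⊤ := levy_far_ne_top hνlevy fun z hz => by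
    have : 1 < z := hz
    nlinarith
  have hNm : Nminus ν 1 ≠ ⊤ := levy_far_ne_top hνlevy fun z hz => by
    have : z < -1 := hz
    nlinarith
  refine ⟨ζ, hζ0, fun t ht => max_le ?_ ?_⟩
  · exact (tail_sSup_le hc₁ hc₂ hc₀ hβ hNp
      (fun l r h1 h2 => tail_scaling hc₁ hboundp hscalep h1 h2) hR0 hl hlR ht).trans
      (mul_le_mul_of_nonneg_left (le_max_left _ _) (by positivity))
  · exact (tail_sSup_le hc₁ hc₂ hc₀ hβ hNm
      (fun l r h1 h2 => tail_scaling hc₁ hboundm hscalem h1 h2) hR0 hl hlR ht).trans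
      (mul_le_mul_of_nonneg_left (le_max_right _ _) (by positivity))
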